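/- Let G be a gonality-tight graph with a vertex v such that removing v leaves the disjoint union of two (possibly disconnected or empty) subgraphs G' and G'', and suppose that for some integer k ≥ 1 the divisor D_2 = (k+1)·v + Σ_{w∈V(G')} w is v-reduced and realises the second gonality of G. Then the divisor k·v has rank at least 1 as a divisor on the subgraph G'' ∪ {v}; in particular, for every effective divisor D on G with D(v) ≥ k and every vertex w ∈ V(G''), the divisor D - w is linearly equivalent to an effective divisor on G. -/

import Mathlib

open Finset

variable {V : Type*} [Fintype V] [DecidableEq V]

/-- A finite loopless multigraph on vertex type `V`, given by symmetric edge multiplicities. -/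
structure Multigraph (V : Type*) [Fintype V] [DecidableEq V] where
  mult : V → V → ℕ
  symm : ∀ u v, mult u v = mult v u
  loopless : ∀ v, mult v v = 0

namespace Multigraph

def Adj (G : Multigraph V) (u v : V) : Prop := 0 < G.mult u v

/-- A graph is connected. -/
def Connected (G : Multigraph V) : Prop :=
  Nonempty V ∧ ∀ u v : V, Relation.ReflTransGen G.Adj u v

/-- Valence of a vertex. -/
def valence (G : Multigraph V) (v : V) : ℕ := ∑ u, G.mult v u

/-- The Laplacian applied to an integer-valued function on the vertices. -/
def laplacian (G : Multigraph V) (f : V → ℤ) : V → ℤ :=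
  fun w => ∑ u, (G.mult w u : ℤ) * (f w - f u)

/-- Degree of a divisor. -/
def degree (D : V → ℤ) : ℤ := ∑ v, D v

/-- A divisor is effective if all coefficients are nonnegative. -/
def Effective (D : V → ℤ) : Prop := ∀ v, 0 ≤ D v

/-- Linear equivalence of divisors: they differ by a sequence of chip-firing moves,
equivalently by a Laplacian of an integer function. -/
def LinEquiv (G : Multigraph V) (D D' : V → ℤ) : Prop :=
  ∃ f : V → ℤ, D' = D - G.laplacian f

/-- A divisor is winnable if it is linearly equivalent to an effective divisor. -/
def Winnable (G : Multigraph V) (D : V → ℤ) : Prop :=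
  ∃ E : V → ℤ, Effective E ∧ G.LinEquiv D E

/-- The Baker–Norine rank of a divisor: the largest `r` such that `D - E` is winnable for
every effective divisor `E` of degree `r` (the defining set contains all negative integers,
and its supremum is `-1` precisely when `D` itself is not winnable). -/
noncomputable def rank (G : Multigraph V) (D : V → ℤ) : ℤ :=
  sSup {r : ℤ | ∀ E : V → ℤ, Effective E → degree E = r → G.Winnable (fun w => D w - E w)}

/-- The `k`-th gonality of a graph: the smallest degree of a divisor of rank `k`. -/
noncomputable def gonality (G : Multigraph V) (k : ℤ) : ℤ :=
  sInf {d : ℤ | ∃ D : V → ℤ, G.rank D = k ∧ degree D = d}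

/-- A graph is gonality-tight if its second gonality exceeds its first by exactly 1. -/
def GonalityTight (G : Multigraph V) : Prop :=
  G.gonality 2 = G.gonality 1 + 1

/-- A divisor realises the `k`-th gonality if it has rank `k` and degree `gon_k(G)`. -/
def Realises (G : Multigraph V) (k : ℤ) (D : V → ℤ) : Prop :=
  G.rank D = k ∧ degree D = G.gonality k

/-- A divisor is `v`-reduced: nonnegative away from `v`, and set-firing any nonempty set of
vertices not containing `v` creates a negative coefficient inside the set. -/
def Reduced (G : Multigraph V) (v : V) (D : V → ℤ) : Prop :=
  (∀ w, w ≠ v → 0 ≤ D w) ∧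
    ∀ U : Finset V, U.Nonempty → v ∉ U →
      ∃ w ∈ U, D w - ∑ u ∈ Uᶜ, (G.mult w u : ℤ) < 0

/-- The genus (first Betti number) of a graph: `|E| - |V| + 1`. -/
def genus (G : Multigraph V) : ℤ :=
  ((∑ u, ∑ v, G.mult u v : ℕ) : ℤ) / 2 - Fintype.card V + 1

/-- The canonical divisor of a graph. -/
def canonical (G : Multigraph V) : V → ℤ :=
  fun w => (G.valence w : ℤ) - 2

/-- The subgraph induced on a set `S` of vertices (with all edges among `S`). -/
def induce (G : Multigraph V) (S : Finset V) : Multigraph {x // x ∈ S} where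
  mult a b := G.mult a b
  symm a b := G.symm a b
  loopless a := G.loopless a

/-- `G.SeparatedBy u w v` means every path from `w` to `v` passes through `u`. -/
def SeparatedBy (G : Multigraph V) (u w v : V) : Prop :=
  ¬ Relation.ReflTransGen (fun x y => G.Adj x y ∧ x ≠ u ∧ y ≠ u) w v

end Multigraph

/-- Size of the `i`-th level of a quasi-banana graph: level `0` has a single vertex. -/
def qbSize (q : ℕ → ℕ) (i : ℕ) : ℕ := if i = 0 then 1 else q i

/-- `ℓ` is a quasi-banana labelling of `G` exhibiting `G ≅ QB_m(q_1, …, q_m)`: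
`ℓ` is a bijection onto the pairs `(i, j)` with `i ≤ m`, `1 ≤ j ≤ qbSize q i`
(vertex `u_{i,j}` is the vertex labelled `(i,j)`), and the edge multiplicities are:
one edge between distinct vertices of the same level, `(∑_{k=1}^{i} q_k) + 2` edges
between `u_{i,1}` and each `u_{i+1,j}`, and no other edges. -/
def Multigraph.IsQBLabelling (G : Multigraph V) (m : ℕ) (q : ℕ → ℕ) (ℓ : V → ℕ × ℕ) : Prop :=
  (∀ i, 1 ≤ i → i ≤ m → 0 < q i) ∧
  Function.Injective ℓ ∧
  (∀ v : V, (ℓ v).1 ≤ m ∧ 1 ≤ (ℓ v).2 ∧ (ℓ v).2 ≤ qbSize q (ℓ v).1) ∧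
  (∀ i j : ℕ, i ≤ m → 1 ≤ j → j ≤ qbSize q i → ∃ v, ℓ v = (i, j)) ∧
  (∀ v w : V, v ≠ w → G.mult v w =
    if (ℓ v).1 = (ℓ w).1 then 1
    else if (ℓ v).1 + 1 = (ℓ w).1 ∧ (ℓ v).2 = 1 then (∑ i ∈ Finset.Icc 1 (ℓ v).1, q i) + 2
    else if (ℓ w).1 + 1 = (ℓ v).1 ∧ (ℓ w).2 = 1 then (∑ i ∈ Finset.Icc 1 (ℓ w).1, q i) + 2
    else 0)

/-- A graph is a quasi-banana graph if it is isomorphic to some `QB_m(N)`. -/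
def Multigraph.IsQuasiBanana (G : Multigraph V) : Prop :=
  ∃ (m : ℕ) (q : ℕ → ℕ) (ℓ : V → ℕ × ℕ), G.IsQBLabelling m q ℓ

/-- The graph obtained from `G'` by attaching a complete graph `K_n`: `n` new vertices
pairwise joined by exactly one edge, each joined to `v` by exactly `k+1` edges. -/
def attachComplete (G' : Multigraph V) (v : V) (k n : ℕ) : Multigraph (V ⊕ Fin n) where
  mult x y :=
    match x, y with
    | Sum.inl a, Sum.inl b => G'.mult a b
    | Sum.inl a, Sum.inr _ => if a = v then k + 1 else 0
    | Sum.inr _, Sum.inl b => if b = v then k + 1 else 0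
    | Sum.inr i, Sum.inr j => if i = j then 0 else 1
  symm := by
    rintro (a | i) (b | j)
    · exact G'.symm a b
    · rfl
    · rfl
    · by_cases h : i = j
      · simp [h]
      · simp [h, Ne.symm h]
  loopless := by
    rintro (a | i)
    · exact G'.loopless a
    · simp

/-!
Suppose firing a script `f` takes `D - E` to an effective divisor, where `D` is `v`-reduced and `E`
is effective. The maximum principle for reduced divisors, applied to one side of the cut vertex `v`,
gives `f ≤ f v` there, so that side only draws chips away from `v`. Forgetting it therefore leaves
a firing script which makes `D - E` effective on the other side: the rank of a `v`-reduced divisor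
does not exceed the rank of its restriction to a subgraph attached at `v`. In the situation of the
theorem that restriction is `(k + 1) • v`, and removing one chip lowers the rank by at most one.
-/

namespace Multigraph

section Divisor

omit [Fintype V] in
theorem effective_single {v : V} {n : ℤ} (hn : 0 ≤ n) : Effective (Pi.single v n) := by
  have h : (0 : V → ℤ) ≤ Pi.single v n := Pi.single_nonneg.2 hn
  exact h

theorem degree_single (v : V) (n : ℤ) : degree (Pi.single v n) = n :=
  Fintype.sum_pi_single' v n

omit [Fintype V] in
theorem restrict_sub_single (D : V → ℤ) {S : Finset V} {w : V} (hw : w ∈ S) (n : ℤ) :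
    S.restrict (D - Pi.single w n) = S.restrict D - Pi.single ⟨w, hw⟩ n := by
  ext x
  simp only [restrict, Pi.sub_apply, Pi.single_apply, Subtype.ext_iff]

omit [DecidableEq V]

omit [Fintype V] in
theorem Effective.add {D E : V → ℤ} (hD : Effective D) (hE : Effective E) : Effective (D + E) :=
  fun v => add_nonneg (hD v) (hE v)

theorem Effective.degree_nonneg {D : V → ℤ} (hD : Effective D) : 0 ≤ degree D :=
  sum_nonneg fun v _ => hD v

theorem degree_add (D E : V → ℤ) : degree (D + E) = degree D + degree E :=
  sum_add_distrib

theorem degree_sub (D E : V → ℤ) : degree (D - E) = degree D - degree E :=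
  sum_sub_distrib _ _

theorem Effective.exists_restrict_eq {S : Finset V} {E : {x // x ∈ S} → ℤ} (hE : Effective E) :
    ∃ F : V → ℤ, Effective F ∧ degree F = degree E ∧ S.restrict F = E := by
  let F : V → ℤ := Function.extend Subtype.val E fun _ => 0
  have hFS : ∀ x : {x // x ∈ S}, F x = E x := Subtype.val_injective.extend_apply E _
  have hFout : ∀ u ∉ Set.range (Subtype.val : {x // x ∈ S} → V), F u = 0 :=
    Function.extend_apply' E _
  refine ⟨F, fun u => ?_, ?_, funext hFS⟩
  · by_cases hu : u ∈ S
    · exact (hE ⟨u, hu⟩).trans_eq (hFS ⟨u, hu⟩).symm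
    · exact (hFout u fun ⟨x, hx⟩ => hu (hx ▸ x.2)).ge
  · exact (Fintype.sum_of_injective _ Subtype.val_injective E F hFout fun x => (hFS x).symm).symm

end Divisor

section Winnable

theorem degree_laplacian (G : Multigraph V) (f : V → ℤ) : degree (G.laplacian f) = 0 := by
  have hneg : degree (G.laplacian f) = -degree (G.laplacian f) := by
    simp only [degree, laplacian]
    conv_lhs => rw [sum_comm]
    simp only [← sum_neg_distrib]
    refine sum_congr rfl fun u _ => sum_congr rfl fun w _ => ?_
    rw [G.symm w u]
    ring
  exact self_eq_neg.1 hneg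

variable {G : Multigraph V} {D D' : V → ℤ}

theorem winnable_iff : G.Winnable D ↔ ∃ f, Effective (D - G.laplacian f) :=
  ⟨fun ⟨_, hE, f, hf⟩ => ⟨f, hf ▸ hE⟩, fun ⟨f, hf⟩ => ⟨_, hf, f, rfl⟩⟩

theorem Winnable.degree_nonneg (hD : G.Winnable D) : 0 ≤ degree D := by
  obtain ⟨f, hf⟩ := winnable_iff.1 hD
  simpa only [degree_sub, degree_laplacian, sub_zero] using hf.degree_nonneg

theorem Winnable.mono (hD : G.Winnable D) (hle : D ≤ D') : G.Winnable D' := by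
  obtain ⟨f, hf⟩ := winnable_iff.1 hD
  exact winnable_iff.2 ⟨f, fun w => (hf w).trans (sub_le_sub_right (hle w) _)⟩

end Winnable

section Rank

variable [Nonempty V]

theorem bddAbove_setOf_winnable_sub (G : Multigraph V) (D : V → ℤ) :
    BddAbove {r : ℤ | ∀ E, Effective E → degree E = r → G.Winnable (D - E)} := by
  refine ⟨max 0 (degree D), fun r hr => ?_⟩
  rcases le_total r 0 with hr0 | hr0
  · exact le_max_of_le_left hr0
  · let v := Classical.arbitrary V
    have hdeg := (hr (Pi.single v r) (effective_single hr0) (degree_single v r)).degree_nonneg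
    rw [degree_sub, degree_single] at hdeg
    exact le_max_of_le_right (sub_nonneg.1 hdeg)

variable {G : Multigraph V} {D D' E : V → ℤ}

theorem winnable_sub_of_degree_eq_rank (hE : Effective E) (hdeg : degree E = G.rank D) :
    G.Winnable (D - E) := by
  have hne : {r : ℤ | ∀ E, Effective E → degree E = r → G.Winnable (D - E)}.Nonempty :=
    ⟨-1, fun E hE hdeg => absurd hE.degree_nonneg (by omega)⟩
  exact Int.csSup_mem hne (G.bddAbove_setOf_winnable_sub D) E hE hdeg

theorem le_rank_iff {r : ℤ} :
    r ≤ G.rank D ↔ ∀ E, Effective E → degree E = r → G.Winnable (D - E) := by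
  refine ⟨fun hr E hE hdeg => ?_, fun h => le_csSup (G.bddAbove_setOf_winnable_sub D) h⟩
  let F : V → ℤ := Pi.single (Classical.arbitrary V) (G.rank D - r)
  have hF : Effective F := effective_single (sub_nonneg.2 hr)
  have hwin : G.Winnable (D - (E + F)) :=
    winnable_sub_of_degree_eq_rank (hE.add hF) <| by
      rw [degree_add, degree_single, hdeg, add_sub_cancel]
  exact hwin.mono (sub_le_sub_left (le_add_of_nonneg_right hF) D)

theorem rank_mono (hle : D ≤ D') : G.rank D ≤ G.rank D' :=
  le_rank_iff.2 fun E hE hdeg =>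
    (winnable_sub_of_degree_eq_rank hE hdeg).mono (sub_le_sub_right hle E)

theorem rank_sub_degree_le_rank_sub (G : Multigraph V) (D : V → ℤ) (hE : Effective E) :
    G.rank D - degree E ≤ G.rank (D - E) := by
  refine le_rank_iff.2 fun F hF hdeg => ?_
  rw [sub_sub]
  refine winnable_sub_of_degree_eq_rank (hE.add hF) ?_
  rw [degree_add, hdeg, add_sub_cancel]

end Rank

/-- A maximum principle: otherwise the set of maxima of `f` on `T` could be fired from `D`. -/
theorem Reduced.le_of_forall_adj_le {G : Multigraph V} {v : V} {D : V → ℤ} (hD : G.Reduced v D)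
    {T : Finset V} (hvT : v ∉ T) {f : V → ℤ} (hf : ∀ w ∈ T, G.laplacian f w ≤ D w) {c : ℤ}
    (hc : ∀ w ∈ T, ∀ u ∉ T, G.Adj w u → f u ≤ c) {w : V} (hw : w ∈ T) : f w ≤ c := by
  obtain ⟨m, hmT, hm⟩ := exists_max_image T f ⟨w, hw⟩
  by_contra! hcw
  have hcm : c < f m := hcw.trans_le (hm w hw)
  let U := {x ∈ T | f x = f m}
  obtain ⟨x, hxU, hneg⟩ := hD.2 U ⟨m, mem_filter.2 ⟨hmT, rfl⟩⟩ fun hv => hvT (mem_filter.1 hv).1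
  obtain ⟨hxT, hxm⟩ := mem_filter.1 hxU
  have hdrop : ∀ u ∈ Uᶜ, G.Adj x u → f u < f x := by
    intro u hu hadj
    rw [hxm]
    by_cases huT : u ∈ T
    · exact (hm u huT).lt_of_ne fun h => mem_compl.1 hu (mem_filter.2 ⟨huT, h⟩)
    · exact (hc x hxT u huT hadj).trans_lt hcm
  have hout : ∑ u ∈ Uᶜ, (G.mult x u : ℤ) ≤ G.laplacian f x := by
    have hU : ∑ u ∈ U, (G.mult x u : ℤ) * (f x - f u) = 0 :=
      sum_eq_zero fun u hu => by rw [hxm, (mem_filter.1 hu).2, sub_self, mul_zero]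
    rw [laplacian, ← sum_add_sum_compl U, hU, zero_add]
    refine sum_le_sum fun u hu => ?_
    rcases (G.mult x u).eq_zero_or_pos with h0 | hadj
    · simp only [h0, Nat.cast_zero, zero_mul, le_refl]
    · exact le_mul_of_one_le_right (Nat.cast_nonneg _) (Int.sub_pos_of_lt (hdrop u hu hadj))
  linarith [hf x hxT]

theorem laplacian_eq_laplacian_induce_add (G : Multigraph V) (S : Finset V) (f : V → ℤ)
    (x : {x // x ∈ S}) :
    G.laplacian f x = (G.induce S).laplacian (S.restrict f) x +
      ∑ u ∈ Sᶜ, (G.mult x u : ℤ) * (f x - f u) := by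
  simp only [laplacian, induce, restrict]
  rw [sum_coe_sort S fun u => (G.mult x u : ℤ) * (f x - f u), sum_add_sum_compl]

/-- The subgraph induced on `S` meets the rest of `G` only in its vertex `v`. When `v` is a cut
vertex, this expresses that `S` consists of `v` and some of the components of `G - v`. -/
structure IsAttachedAt (G : Multigraph V) (S : Finset V) (v : V) : Prop where
  mem : v ∈ S
  eq_of_adj : ∀ x ∈ S, ∀ u ∉ S, G.Adj x u → x = v

namespace IsAttachedAt

variable {G : Multigraph V} {S : Finset V} {v : V}

theorem mult_mul_apply (hS : G.IsAttachedAt S v) {x u : V} (hx : x ∈ S) (hu : u ∉ S)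
    (f : V → ℤ) : (G.mult x u : ℤ) * f x = G.mult x u * f v := by
  rcases (G.mult x u).eq_zero_or_pos with h0 | hadj
  · simp only [h0, Nat.cast_zero, zero_mul]
  · rw [hS.eq_of_adj x hx u hu hadj]

theorem laplacian_induce_le (hS : G.IsAttachedAt S v) {f : V → ℤ} (hf : ∀ u ∉ S, f u ≤ f v)
    (x : {x // x ∈ S}) : (G.induce S).laplacian (S.restrict f) x ≤ G.laplacian f x := by
  rw [laplacian_eq_laplacian_induce_add]
  refine le_add_of_nonneg_right (sum_nonneg fun u hu => ?_)
  have hu := mem_compl.1 hu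
  rw [mul_sub, hS.mult_mul_apply x.2 hu, ← mul_sub]
  exact mul_nonneg (Nat.cast_nonneg _) (sub_nonneg.2 (hf u hu))

theorem laplacian_eq_laplacian_induce (hS : G.IsAttachedAt S v) {f : V → ℤ}
    (hf : ∀ u ∉ S, f u = f v) (x : {x // x ∈ S}) :
    G.laplacian f x = (G.induce S).laplacian (S.restrict f) x := by
  rw [laplacian_eq_laplacian_induce_add, add_eq_left]
  refine sum_eq_zero fun u hu => ?_
  have hu := mem_compl.1 hu
  rw [mul_sub, hS.mult_mul_apply x.2 hu, hf u hu, sub_self]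

theorem laplacian_eq_zero_of_notMem (hS : G.IsAttachedAt S v) {f : V → ℤ} (hf : ∀ u ∉ S, f u = f v)
    {u : V} (hu : u ∉ S) : G.laplacian f u = 0 := by
  refine sum_eq_zero fun x _ => ?_
  rw [hf u hu, mul_sub, sub_eq_zero]
  by_cases hx : x ∈ S
  · rw [G.symm u x, hS.mult_mul_apply hx hu]
  · rw [hf x hx]

theorem winnable_of_induce (hS : G.IsAttachedAt S v) {D : V → ℤ} (hD : ∀ u ∉ S, 0 ≤ D u)
    (hwin : (G.induce S).Winnable (S.restrict D)) : G.Winnable D := by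
  obtain ⟨g, hg⟩ := winnable_iff.1 hwin
  let f : V → ℤ := Function.extend Subtype.val g fun _ => g ⟨v, hS.mem⟩
  have hfS : S.restrict f = g :=
    funext fun x => Subtype.val_injective.extend_apply g (fun _ => g ⟨v, hS.mem⟩) x
  have hf : ∀ u ∉ S, f u = f v := fun u hu =>
    (Function.extend_apply' g _ u fun ⟨x, hx⟩ => hu (hx ▸ x.2)).trans
      (congrFun hfS ⟨v, hS.mem⟩).symm
  refine winnable_iff.2 ⟨f, fun u => ?_⟩
  by_cases hu : u ∈ S
  · have hlap := hS.laplacian_eq_laplacian_induce hf ⟨u, hu⟩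
    rw [hfS] at hlap
    simpa only [Pi.sub_apply, hlap, restrict] using hg ⟨u, hu⟩
  · simpa only [Pi.sub_apply, hS.laplacian_eq_zero_of_notMem hf hu, sub_zero] using hD u hu

theorem winnable_sub_single_of_one_le_rank_induce (hS : G.IsAttachedAt S v) {D : V → ℤ}
    (hD : ∀ u ∉ S, 0 ≤ D u) (hrank : 1 ≤ (G.induce S).rank (S.restrict D)) {w : V} (hw : w ∈ S) :
    G.Winnable (D - Pi.single w 1) := by
  have : Nonempty {x // x ∈ S} := ⟨⟨v, hS.mem⟩⟩
  have hwin := le_rank_iff.1 hrank (Pi.single ⟨w, hw⟩ 1) (effective_single zero_le_one)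
    (degree_single _ _)
  rw [← restrict_sub_single] at hwin
  refine hS.winnable_of_induce (fun u hu => ?_) hwin
  have huw : u ≠ w := fun h => hu (h ▸ hw)
  simpa only [Pi.sub_apply, Pi.single_eq_of_ne huw, sub_zero] using hD u hu

theorem winnable_induce_of_reduced (hS : G.IsAttachedAt S v) {D E : V → ℤ} (hD : G.Reduced v D)
    (hE : ∀ u ∉ S, 0 ≤ E u) (hwin : G.Winnable (D - E)) :
    (G.induce S).Winnable (S.restrict (D - E)) := by
  obtain ⟨f, hf⟩ := winnable_iff.1 hwin
  have hfv : ∀ u ∉ S, f u ≤ f v := by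
    intro u hu
    refine hD.le_of_forall_adj_le (T := Sᶜ) (by simpa using hS.mem) (fun w hw => ?_)
      (fun w hw x hx hadj => ?_) (mem_compl.2 hu)
    · have hfw := hf w
      have hEw := hE w (mem_compl.1 hw)
      simp only [Pi.sub_apply] at hfw
      linarith
    · have hadj' : G.Adj x w := by rwa [Adj, G.symm]
      rw [hS.eq_of_adj x (by simpa using hx) w (mem_compl.1 hw) hadj']
  exact winnable_iff.2 ⟨S.restrict f, fun x =>
    (hf x).trans (sub_le_sub_left (hS.laplacian_induce_le hfv x) _)⟩

theorem rank_le_rank_induce (hS : G.IsAttachedAt S v) {D : V → ℤ} (hD : G.Reduced v D) :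
    G.rank D ≤ (G.induce S).rank (S.restrict D) := by
  have : Nonempty V := ⟨v⟩
  have : Nonempty {x // x ∈ S} := ⟨⟨v, hS.mem⟩⟩
  refine le_rank_iff.2 fun E hE hdeg => ?_
  obtain ⟨F, hF, hFdeg, rfl⟩ := hE.exists_restrict_eq
  exact hS.winnable_induce_of_reduced hD (fun u _ => hF u)
    (winnable_sub_of_degree_eq_rank hF (hFdeg.trans hdeg))

theorem rank_sub_one_le_rank_induce (hS : G.IsAttachedAt S v) {D : V → ℤ} (hD : G.Reduced v D)
    {w : V} (hw : w ∈ S) :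
    G.rank D - 1 ≤ (G.induce S).rank (S.restrict (D - Pi.single w 1)) := by
  have : Nonempty {x // x ∈ S} := ⟨⟨w, hw⟩⟩
  have hle := (G.induce S).rank_sub_degree_le_rank_sub (S.restrict D)
    (effective_single (v := ⟨w, hw⟩) zero_le_one)
  rw [degree_single, ← restrict_sub_single] at hle
  exact (sub_le_sub_right (hS.rank_le_rank_induce hD) 1).trans hle

end IsAttachedAt

theorem isAttachedAt_insert {G : Multigraph V} {v : V} {A B : Finset V}
    (hAB : univ.erase v ⊆ A ∪ B) (hnoedge : ∀ a ∈ A, ∀ b ∈ B, G.mult a b = 0) :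
    G.IsAttachedAt (insert v B) v where
  mem := mem_insert_self v B
  eq_of_adj x hx u hu hadj := by
    rw [mem_insert, not_or] at hu
    have huA : u ∈ A :=
      (mem_union.1 (hAB (mem_erase.2 ⟨hu.1, mem_univ u⟩))).resolve_right hu.2
    refine (mem_insert.1 hx).resolve_right fun hxB => hadj.ne' ?_
    rw [G.symm, hnoedge u huA x hxB]

end Multigraph

open Multigraph in
theorem stmt19_general (G : Multigraph V) (v : V) (A B : Finset V)
    (hAB : A ∪ B = Finset.univ.erase v) (hnoedge : ∀ a ∈ A, ∀ b ∈ B, G.mult a b = 0)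
    (k : ℤ) (D₂ : V → ℤ) (hD₂v : D₂ v = k + 1) (hD₂B : ∀ w ∈ B, D₂ w = 0)
    (hred : G.Reduced v D₂) (hrank : 2 ≤ G.rank D₂) :
    1 ≤ (G.induce (insert v B)).rank (fun x => if x.1 = v then k else 0) ∧
    ∀ D : V → ℤ, Effective D → k ≤ D v → ∀ w ∈ B,
      G.Winnable (fun x => D x - if x = w then 1 else 0) := by
  have hS : G.IsAttachedAt (insert v B) v := isAttachedAt_insert hAB.ge hnoedge
  have : Nonempty {x // x ∈ insert v B} := ⟨⟨v, hS.mem⟩⟩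
  let kv : {x // x ∈ insert v B} → ℤ := fun x => if x.1 = v then k else 0
  have hkv : 1 ≤ (G.induce (insert v B)).rank kv := by
    have hD₂kv : (insert v B).restrict (D₂ - Pi.single v 1) = kv := by
      ext ⟨x, hx⟩
      rcases eq_or_ne x v with rfl | hxv
      · simp [kv, hD₂v]
      · simp [kv, hxv, hD₂B x ((mem_insert.1 hx).resolve_left hxv)]
    have hle := hS.rank_sub_one_le_rank_induce hred hS.mem
    rw [hD₂kv] at hle
    linarith
  refine ⟨hkv, fun D hD hDv w hw => ?_⟩
  have hle : kv ≤ (insert v B).restrict D := by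
    intro x
    rcases eq_or_ne x.1 v with hx | hx
    · simpa only [kv, hx, if_true, restrict] using hDv
    · simpa only [kv, hx, if_false, restrict] using hD x
  have hwin := hS.winnable_sub_single_of_one_le_rank_induce (fun u _ => hD u)
    (hkv.trans (rank_mono hle)) (mem_insert_of_mem hw)
  exact hwin.mono fun x => by simp only [Pi.sub_apply, Pi.single_apply, le_refl]

/-- In the setting of the structure lemma (gonality-tight `G`, cut vertex
`v` splitting off `G'` with vertex set `A` and `G''` with vertex set `B`, `v`-reduced
divisor `D₂ = (k+1)·v + ∑_{w ∈ A} w` realising the second gonality), the divisor `k·v` has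
rank at least `1` on `G'' ∪ {v}`; in particular, for every effective divisor `D` on `G`
with `D(v) ≥ k` and every `w ∈ B`, the divisor `D - w` is winnable on `G`. -/
theorem stmt19 (G : Multigraph V) (hG : G.Connected) (hGT : G.GonalityTight)
    (v : V) (A B : Finset V)
    (hAB : A ∪ B = Finset.univ.erase v) (hdisj : Disjoint A B)
    (hnoedge : ∀ a ∈ A, ∀ b ∈ B, G.mult a b = 0)
    (k : ℕ) (hk : 1 ≤ k)
    (D₂ : V → ℤ)
    (hD₂ : D₂ = fun w => if w = v then (k : ℤ) + 1 else if w ∈ A then 1 else 0)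
    (hred : G.Reduced v D₂) (hreal : G.Realises 2 D₂) :
    1 ≤ (G.induce (insert v B)).rank (fun x => if x.1 = v then (k : ℤ) else 0) ∧
    ∀ D : V → ℤ, Multigraph.Effective D → (k : ℤ) ≤ D v → ∀ w ∈ B,
      G.Winnable (fun x => D x - if x = w then 1 else 0) := by
  refine stmt19_general G v A B hAB hnoedge k D₂ (by simp [hD₂]) (fun w hw => ?_) hred hreal.1.ge
  simp [hD₂, ne_of_mem_erase (hAB ▸ mem_union_right A hw), disjoint_right.1 hdisj hw]
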